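/- arXiv:1901.09418 — 3 statements merged into one kernel-verified Lean document; each statement's English description precedes it below -/
import Mathlib

section
/- Fix a link bid β_m ≥ 0 for user m. If β_m > 0, let r_{β_m} be the unique nonnegative solution of U_m'(r) = 2r/β_m; then p_m^β = r_{β_m}²/β_m is a maximizer of the function p ↦ U_m(√(p β_m)) − p over p ≥ 0. If β_m = 0, then p_m^β = 0 maximizes this function (which then equals U_m(0) − p). -/
open Finset

/-! For `β > 0`, substituting `s = √(p * β)`, so that `p = s ^ 2 / β`, turns the pay-off into
`U s - s ^ 2 / β`. This is concave in `s`, hence maximal wherever its derivative vanishes. -/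

theorem isMaxOn_of_concaveOn_of_hasDerivWithinAt_zero {S : Set ℝ} {f : ℝ → ℝ} {x : ℝ}
    (hf : ConcaveOn ℝ S f) (hx : x ∈ S) (hf' : HasDerivWithinAt f 0 S x) : IsMaxOn f S x := by
  refine isMaxOn_iff.2 fun y hy ↦ ?_
  rcases lt_trichotomy y x with hyx | rfl | hxy
  · exact (slope_nonneg_iff_of_le hyx.le).1 (hf.le_slope_of_hasDerivWithinAt hy hx hyx hf')
  · exact le_rfl
  · exact (slope_nonpos_iff_of_le hxy.le).1 (hf.slope_le_of_hasDerivWithinAt hx hy hxy hf')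

theorem convexOn_sq_div {S : Set ℝ} (hS : Convex ℝ S) {β : ℝ} (hβ : 0 ≤ β) :
    ConvexOn ℝ S fun s ↦ s ^ 2 / β := by
  simpa only [smul_eq_mul, inv_mul_eq_div] using
    (even_two.convexOn_pow.subset S.subset_univ hS).smul (inv_nonneg.2 hβ)

theorem isMaxOn_sub_sq_div_of_concaveOn {S : Set ℝ} {U : ℝ → ℝ} {β r : ℝ}
    (hU : ConcaveOn ℝ S U) (hβ : 0 ≤ β) (hr : r ∈ S)
    (hU' : HasDerivWithinAt U (2 * r / β) S r) :
    IsMaxOn (fun s ↦ U s - s ^ 2 / β) S r := by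
  have hconcave : ConcaveOn ℝ S fun s ↦ U s - s ^ 2 / β := hU.sub (convexOn_sq_div hU.1 hβ)
  have hcritical : HasDerivWithinAt (fun s ↦ U s - s ^ 2 / β) 0 S r := by
    simpa using hU'.fun_sub ((hasDerivAt_pow 2 r).div_const β).hasDerivWithinAt
  exact isMaxOn_of_concaveOn_of_hasDerivWithinAt_zero hconcave hr hcritical

/-- The pay-off `Q_m` of a user with utility `U` who bids `p` against the link bid `β`. -/
noncomputable def userPayoff (U : ℝ → ℝ) (β p : ℝ) : ℝ := U √(p * β) - p

theorem userPayoff_eq_sub_sq_div (U : ℝ → ℝ) {β p : ℝ} (hβ : 0 < β) (hp : 0 ≤ p) :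
    userPayoff U β p = U √(p * β) - √(p * β) ^ 2 / β := by
  rw [userPayoff, Real.sq_sqrt (mul_nonneg hp hβ.le), mul_div_cancel_right₀ p hβ.ne']

theorem isMaxOn_userPayoff_sq_div {U : ℝ → ℝ} {β r : ℝ} (hβ : 0 < β) (hr : 0 ≤ r)
    (hmax : IsMaxOn (fun s ↦ U s - s ^ 2 / β) (Set.Ici 0) r) :
    IsMaxOn (userPayoff U β) (Set.Ici 0) (r ^ 2 / β) := by
  refine isMaxOn_iff.2 fun q hq ↦ ?_
  have hsqrt : √(r ^ 2 / β * β) = r := by rw [div_mul_cancel₀ _ hβ.ne', Real.sqrt_sq hr]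
  calc userPayoff U β q = U √(q * β) - √(q * β) ^ 2 / β := userPayoff_eq_sub_sq_div U hβ hq
    _ ≤ U r - r ^ 2 / β := isMaxOn_iff.1 hmax _ (Real.sqrt_nonneg _)
    _ = userPayoff U β (r ^ 2 / β) := by rw [userPayoff, hsqrt]

theorem isMaxOn_userPayoff_zero (U : ℝ → ℝ) : IsMaxOn (userPayoff U 0) (Set.Ici 0) 0 :=
  isMaxOn_iff.2 fun q hq ↦ by simpa [userPayoff] using hq

theorem statement5_general {U : ℝ → ℝ} (hU : ConcaveOn ℝ (Set.Ici 0) U) (β : ℝ) :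
    (∀ r : ℝ, 0 < β → 0 ≤ r → HasDerivWithinAt U (2 * r / β) (Set.Ici 0) r →
      IsMaxOn (userPayoff U β) (Set.Ici 0) (r ^ 2 / β)) ∧
    (β = 0 → IsMaxOn (userPayoff U β) (Set.Ici 0) 0) := by
  refine ⟨fun r hβ hr hU' ↦ ?_, ?_⟩
  · exact isMaxOn_userPayoff_sq_div hβ hr (isMaxOn_sub_sq_div_of_concaveOn hU hβ.le hr hU')
  · rintro rfl
    exact isMaxOn_userPayoff_zero U

/-- User best response in the Stackelberg mechanism, single link,
uncapacitated.  Fix a link bid `β ≥ 0` for user `m`.  If `β > 0` and `r ≥ 0` solves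
`U'(r) = 2r/β`, then `p = r²/β` maximizes `p ↦ U(√(pβ)) − p` over `p ≥ 0`.
If `β = 0`, then `p = 0` is a maximizer. -/
theorem statement5
    (U : ℝ → ℝ)
    (hUconc : ConcaveOn ℝ (Set.Ici 0) U)
    (hUmono : StrictMonoOn U (Set.Ici 0))
    (hUdiff : ∀ x ∈ Set.Ici (0:ℝ), DifferentiableAt ℝ U x)
    (hUderivcont : ContinuousOn (deriv U) (Set.Ici 0))
    (β : ℝ) (hβ : 0 ≤ β) :
    (∀ r : ℝ, 0 < β → 0 ≤ r → deriv U r = 2 * r / β →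
      ∀ q : ℝ, 0 ≤ q →
        U (Real.sqrt (q * β)) - q ≤ U (Real.sqrt (r ^ 2 / β * β)) - r ^ 2 / β) ∧
    (β = 0 →
      ∀ q : ℝ, 0 ≤ q →
        U (Real.sqrt (q * β)) - q ≤ U (Real.sqrt (0 * β)) - 0) := by
  obtain ⟨hpos, hzero⟩ := statement5_general hUconc β
  exact ⟨fun r hβ' hr hd ↦ hpos r hβ' hr (hd ▸ (hUdiff r hr).hasDerivAt.hasDerivWithinAt), hzero⟩
end

section
/- Let user pay-offs be linear, U_m(x) = c_m x with c_m > 0 for each m, and suppose c_1 = max_m c_m. Then the vector β* defined by β*_1 = (2/c_1)·v⁻¹(c_1/2) and β*_m = 0 for m ≠ 1 is a maximizer of the link-supplier's objective β ↦ −V(Σ_m β_m c_m/2) + Σ_m β_m c_m²/4 over all β ≥ 0. Consequently, at the resulting Stackelberg equilibrium the user bids are p_1^{β*} = (c_1/2)·v⁻¹(c_1/2) and p_m^{β*} = 0 for m ≠ 1, and the equilibrium rate allocation is x_1^{β*} = v⁻¹(c_1/2) and x_m^{β*} = 0 for m ≠ 1. -/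
open Finset

/-!
At the users' best response to a link bid, user `m` pays exactly `c m / 2` per unit of rate. A
total rate `r` therefore earns the link-supplier at most `c m₁ / 2 * r - V r`, with equality when
all of it goes to the user `m₁` of largest slope. This concave function of `r` is maximal where
`V' r = c m₁ / 2`, because a convex cost lies above its tangent lines.
-/

theorem isMaxOn_mul_sub_of_hasDerivWithinAt {s : Set ℝ} {f : ℝ → ℝ} {p x : ℝ}
    (hf : ConvexOn ℝ s f) (hx : x ∈ s) (hfx : HasDerivWithinAt f p s x) :
    IsMaxOn (fun y ↦ p * y - f y) s x := by
  refine isMaxOn_iff.2 fun y hy ↦ ?_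
  rcases lt_trichotomy x y with hxy | rfl | hyx
  · have hslope := hf.le_slope_of_hasDerivWithinAt hx hy hxy hfx
    rw [slope_def_field, le_div_iff₀ (sub_pos.2 hxy)] at hslope
    linarith
  · rfl
  · have hslope := hf.slope_le_of_hasDerivWithinAt hy hx hyx hfx
    rw [slope_def_field, div_le_iff₀ (sub_pos.2 hyx)] at hslope
    linarith

section Game

variable {ι : Type*}

/-- The best-response bid `p_m^β` of user `m`, with linear pay-off of slope `c m`, to the link bid
`β`. -/
noncomputable def userBid (c β : ι → ℝ) (m : ι) : ℝ :=
  β m * c m ^ 2 / 4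

/-- The rate `r_{β_m}` that user `m` obtains by its best response to the link bid `β`. -/
noncomputable def userDemand (c β : ι → ℝ) (m : ι) : ℝ :=
  β m * c m / 2

/-- The rate `√(p_m β_m)` that the mechanism allocates to user `m`, given the user bids `p` and the
link bid `β`. -/
noncomputable def rateAllocation (p β : ι → ℝ) (m : ι) : ℝ :=
  √(p m * β m)

/-- The pay-off of the leading link-supplier with link-cost `V` who bids `β`: the users'
best-response bids minus the cost of the total rate. -/
noncomputable def supplierPayoff [Fintype ι] (V : ℝ → ℝ) (c β : ι → ℝ) : ℝ :=
  -V (∑ m, userDemand c β m) + ∑ m, userBid c β m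

/-- The link bid `β*` that sells the rate `x` to user `m₁` and nothing to the other users. -/
noncomputable def singleUserBid [DecidableEq ι] (c : ι → ℝ) (m₁ : ι) (x : ℝ) : ι → ℝ :=
  Pi.single m₁ (2 / c m₁ * x)

theorem userBid_eq_mul_userDemand (c β : ι → ℝ) (m : ι) :
    userBid c β m = c m / 2 * userDemand c β m := by
  unfold userBid userDemand
  ring

theorem userDemand_nonneg {c β : ι → ℝ} {m : ι} (hc : 0 ≤ c m) (hβ : 0 ≤ β m) :
    0 ≤ userDemand c β m := by
  unfold userDemand
  positivity

theorem rateAllocation_userBid {c β : ι → ℝ} {m : ι} (hc : 0 ≤ c m) (hβ : 0 ≤ β m) :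
    rateAllocation (userBid c β) β m = userDemand c β m := by
  have hsq : userBid c β m * β m = userDemand c β m ^ 2 := by
    unfold userBid userDemand
    ring
  rw [rateAllocation, hsq, Real.sqrt_sq (userDemand_nonneg hc hβ)]

theorem supplierPayoff_le [Fintype ι] (V : ℝ → ℝ) {c β : ι → ℝ} {C : ℝ} (hc : 0 ≤ c)
    (hcC : ∀ m, c m ≤ C) (hβ : 0 ≤ β) :
    supplierPayoff V c β ≤ C / 2 * ∑ m, userDemand c β m - V (∑ m, userDemand c β m) := by
  have hrevenue : ∑ m, userBid c β m ≤ C / 2 * ∑ m, userDemand c β m := by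
    simp only [userBid_eq_mul_userDemand, Finset.mul_sum]
    gcongr with m
    · exact userDemand_nonneg (hc m) (hβ m)
    · exact hcC m
  unfold supplierPayoff
  linarith

variable [DecidableEq ι] {c : ι → ℝ} {m₁ : ι}

theorem singleUserBid_nonneg {x : ℝ} (hc₁ : 0 ≤ c m₁) (hx : 0 ≤ x) :
    0 ≤ singleUserBid c m₁ x :=
  Pi.single_nonneg.2 (by positivity)

theorem userDemand_singleUserBid (hc₁ : c m₁ ≠ 0) (x : ℝ) :
    userDemand c (singleUserBid c m₁ x) = Pi.single m₁ x := by
  funext m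
  obtain rfl | hm := eq_or_ne m m₁
  · simp only [userDemand, singleUserBid, Pi.single_eq_same]
    field_simp
  · simp [userDemand, singleUserBid, hm]

theorem userBid_singleUserBid (hc₁ : c m₁ ≠ 0) (x : ℝ) :
    userBid c (singleUserBid c m₁ x) = Pi.single m₁ (c m₁ / 2 * x) := by
  funext m
  rw [userBid_eq_mul_userDemand, userDemand_singleUserBid hc₁]
  obtain rfl | hm := eq_or_ne m m₁
  · simp only [Pi.single_eq_same]
  · simp [hm]

theorem supplierPayoff_singleUserBid [Fintype ι] (V : ℝ → ℝ) (hc₁ : c m₁ ≠ 0) (x : ℝ) :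
    supplierPayoff V c (singleUserBid c m₁ x) = c m₁ / 2 * x - V x := by
  simp only [supplierPayoff, userDemand_singleUserBid hc₁, userBid_singleUserBid hc₁,
    Fintype.sum_pi_single']
  ring

theorem isMaxOn_supplierPayoff_singleUserBid [Fintype ι] {V : ℝ → ℝ} {x : ℝ} (hc : 0 ≤ c)
    (hc₁ : c m₁ ≠ 0) (hmax : ∀ m, c m ≤ c m₁) (hV : ConvexOn ℝ (Set.Ici 0) V) (hx : 0 ≤ x)
    (hVx : HasDerivWithinAt V (c m₁ / 2) (Set.Ici 0) x) :
    IsMaxOn (supplierPayoff V c) (Set.Ici 0) (singleUserBid c m₁ x) := by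
  refine isMaxOn_iff.2 fun β hβ ↦ ?_
  have htotal : 0 ≤ ∑ m, userDemand c β m :=
    Finset.sum_nonneg fun m _ ↦ userDemand_nonneg (hc m) (hβ m)
  calc
    supplierPayoff V c β
      ≤ c m₁ / 2 * ∑ m, userDemand c β m - V (∑ m, userDemand c β m) :=
        supplierPayoff_le V hc hmax hβ
    _ ≤ c m₁ / 2 * x - V x := isMaxOn_mul_sub_of_hasDerivWithinAt hV hx hVx htotal
    _ = supplierPayoff V c (singleUserBid c m₁ x) := (supplierPayoff_singleUserBid V hc₁ x).symm

end Game

theorem statement8_general {ι : Type*} [Fintype ι] [DecidableEq ι] {c : ι → ℝ} {m₁ : ι}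
    {V : ℝ → ℝ} {x : ℝ} (hc : 0 ≤ c) (hc₁ : c m₁ ≠ 0) (hmax : ∀ m, c m ≤ c m₁)
    (hV : ConvexOn ℝ (Set.Ici 0) V) (hx : 0 ≤ x)
    (hVx : HasDerivWithinAt V (c m₁ / 2) (Set.Ici 0) x) :
    IsMaxOn (supplierPayoff V c) (Set.Ici 0) (singleUserBid c m₁ x) ∧
      userBid c (singleUserBid c m₁ x) = Pi.single m₁ (c m₁ / 2 * x) ∧
      rateAllocation (Pi.single m₁ (c m₁ / 2 * x)) (singleUserBid c m₁ x) = Pi.single m₁ x := by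
  refine ⟨isMaxOn_supplierPayoff_singleUserBid hc hc₁ hmax hV hx hVx,
    userBid_singleUserBid hc₁ x, ?_⟩
  funext m
  rw [← userBid_singleUserBid hc₁,
    rateAllocation_userBid (hc m) (singleUserBid_nonneg (hc m₁) hx m),
    userDemand_singleUserBid hc₁]

/-- Stackelberg equilibrium for linear user pay-offs, single link,
uncapacitated.  Pay-offs `U m x = c m * x`, `c m > 0`, with `c m₁` maximal, and
`w = v⁻¹` the inverse of the marginal cost `v = V'`.  Then
`β* m₁ = (2/c m₁)·v⁻¹(c m₁/2)`, `β* m = 0` otherwise, maximizes the link-supplier's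
objective `β ↦ −V(Σ β_m c_m/2) + Σ β_m c_m²/4` over `β ≥ 0`; the user equilibrium bids
are `p m₁ = (c m₁/2)·v⁻¹(c m₁/2)`, `p m = 0` otherwise; and the equilibrium rates are
`x m₁ = v⁻¹(c m₁/2)`, `x m = 0` otherwise. -/
theorem statement8
    (M : ℕ) (hM : 0 < M)
    (c : Fin M → ℝ) (hc : ∀ m, 0 < c m)
    (m₁ : Fin M) (hmax : ∀ m, c m ≤ c m₁)
    (V v w : ℝ → ℝ)
    (hVconv : StrictConvexOn ℝ (Set.Ici 0) V)
    (hVmono : StrictMonoOn V (Set.Ici 0))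
    (hV0 : V 0 = 0)
    (hv : ∀ x ∈ Set.Ici (0:ℝ), HasDerivAt V (v x) x)
    (hv0 : v 0 = 0)
    (hvmono : StrictMonoOn v (Set.Ici 0))
    (hvcont : ContinuousOn v (Set.Ici 0))
    (hw : ∀ y : ℝ, 0 < y → 0 ≤ w y ∧ v (w y) = y) :
    -- β* maximizes the link-supplier's objective
    (∀ β : Fin M → ℝ, (∀ m, 0 ≤ β m) →
      -V (∑ m, β m * c m / 2) + ∑ m, β m * (c m) ^ 2 / 4 ≤
      -V (∑ m, (if m = m₁ then 2 / c m₁ * w (c m₁ / 2) else 0) * c m / 2) +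
        ∑ m, (if m = m₁ then 2 / c m₁ * w (c m₁ / 2) else 0) * (c m) ^ 2 / 4) ∧
    -- the resulting user bids p_m^{β*} = β*_m c_m²/4
    (∀ m, (if m = m₁ then 2 / c m₁ * w (c m₁ / 2) else 0) * (c m) ^ 2 / 4 =
      (if m = m₁ then c m₁ / 2 * w (c m₁ / 2) else 0)) ∧
    -- the equilibrium rate allocation x_m^{β*} = √(p_m^{β*} β*_m)
    (∀ m, Real.sqrt ((if m = m₁ then c m₁ / 2 * w (c m₁ / 2) else 0) *
        (if m = m₁ then 2 / c m₁ * w (c m₁ / 2) else 0)) =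
      (if m = m₁ then w (c m₁ / 2) else 0)) := by
  obtain ⟨hw0, hvw⟩ := hw (c m₁ / 2) (half_pos (hc m₁))
  have hVw : HasDerivAt V (c m₁ / 2) (w (c m₁ / 2)) := by
    simpa only [hvw] using hv _ hw0
  simpa only [isMaxOn_iff, supplierPayoff, userBid, userDemand, rateAllocation, singleUserBid,
    funext_iff, Pi.single_apply, Set.mem_Ici, Pi.le_def, Pi.zero_apply] using
    statement8_general (fun m ↦ (hc m).le) (hc m₁).ne' hmax hVconv.convexOn hw0
      hVw.hasDerivWithinAt
end

section
/- In the uncapacitated multiple-link setting with linear user pay-offs U_m(x) = c_m x, c_m > 0, and c_1 = max_m c_m: the matrix B* with β*_{1ℓ} = (2/c_1)·v_ℓ⁻¹(c_1/2) and β*_{mℓ} = 0 for m ≠ 1 is such that, for every ℓ, β*_ℓ maximizes the (decoupled) link-ℓ objective β_ℓ ↦ −V_ℓ(Σ_m β_{mℓ} c_m/2) + Σ_m β_{mℓ} c_m²/4 over nonnegative β_ℓ; hence B* is a Nash equilibrium of the link game 𝒢_L and (B*, P^{B*}) is a Stackelberg equilibrium. At this equilibrium, p_{1ℓ}^{B*}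 = (c_1/2)·v_ℓ⁻¹(c_1/2) and p_{mℓ}^{B*} = 0 for m ≠ 1, the rate of user 1 on link ℓ is v_ℓ⁻¹(c_1/2) and all other users receive zero rate, and the total rate served by link ℓ is v_ℓ⁻¹(c_1/2). -/
open Finset

/-!
Serving user `m` at rate `r` takes the bid `2 / c m * r` and earns the link `c m / 2 * r`. A link
of total rate `R` thus earns at most `c m₁ / 2 * R`, with equality when all of `R` goes to the user
`m₁` with the steepest pay-off. This reduces the choice of a bid vector to maximizing the concave
function `R ↦ c m₁ / 2 * R - V R`, that is, to equating the marginal cost with `c m₁ / 2`.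
-/

theorem isMaxOn_mul_sub_of_convexOn {s : Set ℝ} {f : ℝ → ℝ} {p x : ℝ} (hf : ConvexOn ℝ s f)
    (hx : x ∈ s) (hd : HasDerivWithinAt f p s x) : IsMaxOn (fun y => p * y - f y) s x := by
  refine isMaxOn_iff.2 fun y hy => ?_
  suffices tangent_le : p * (y - x) ≤ f y - f x by linarith
  rcases lt_trichotomy x y with hxy | rfl | hyx
  · have hslope := hf.le_slope_of_hasDerivWithinAt hx hy hxy hd
    rwa [slope_def_field, le_div_iff₀ (sub_pos.2 hxy)] at hslope
  · simp
  · have hslope := hf.slope_le_of_hasDerivWithinAt hy hx hyx hd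
    rw [slope_def_field, div_le_iff₀ (sub_pos.2 hyx)] at hslope
    linarith

section LinearPayoffs

variable {ι : Type*}

/-- The payments of the users facing the bids `β` of a single link: `β m * c m ^ 2 / 4` is the
maximizer over `p ≥ 0` of the net pay-off `c m * √(p * β m) - p` of user `m` when `c m, β m ≥ 0`. -/
noncomputable def bestResponse (c β : ι → ℝ) (m : ι) : ℝ :=
  β m * c m ^ 2 / 4

/-- The rate a link allocates to each user under payments `p` and bids `β`. -/
noncomputable def userRate (p β : ι → ℝ) (m : ι) : ℝ :=
  √(p m * β m)

theorem userRate_bestResponse {c β : ι → ℝ} (hc : 0 ≤ c) (hβ : 0 ≤ β) (m : ι) :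
    userRate (bestResponse c β) β m = β m * c m / 2 := by
  have hsq : bestResponse c β m * β m = (β m * c m / 2) ^ 2 := by
    unfold bestResponse
    ring
  rw [userRate, hsq, Real.sqrt_sq (div_nonneg (mul_nonneg (hβ m) (hc m)) zero_le_two)]

/-- The bids of a link that obtains the rate `x` from user `m₁` alone: one column of the
equilibrium matrix `B*`. -/
noncomputable def soleUserBid [DecidableEq ι] (c : ι → ℝ) (m₁ : ι) (x : ℝ) : ι → ℝ :=
  Pi.single m₁ (2 / c m₁ * x)

section SoleUserBid

variable [DecidableEq ι] {c : ι → ℝ} {m₁ : ι}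

theorem soleUserBid_nonneg (hm₁ : 0 ≤ c m₁) {x : ℝ} (hx : 0 ≤ x) : 0 ≤ soleUserBid c m₁ x :=
  Pi.single_nonneg.2 (mul_nonneg (div_nonneg zero_le_two hm₁) hx)

theorem soleUserBid_mul_div_two (hm₁ : c m₁ ≠ 0) (x : ℝ) (m : ι) :
    soleUserBid c m₁ x m * c m / 2 = (Pi.single m₁ x : ι → ℝ) m := by
  rcases eq_or_ne m m₁ with rfl | hm
  · simp only [soleUserBid, Pi.single_eq_same]
    field_simp
  · simp [soleUserBid, hm]

theorem bestResponse_soleUserBid (hm₁ : c m₁ ≠ 0) (x : ℝ) :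
    bestResponse c (soleUserBid c m₁ x) = Pi.single m₁ (c m₁ / 2 * x) := by
  ext m
  calc bestResponse c (soleUserBid c m₁ x) m
      = c m / 2 * (soleUserBid c m₁ x m * c m / 2) := by unfold bestResponse; ring
    _ = c m / 2 * (Pi.single m₁ x : ι → ℝ) m := by rw [soleUserBid_mul_div_two hm₁]
    _ = (Pi.single m₁ (c m₁ / 2 * x) : ι → ℝ) m := by
        rcases eq_or_ne m m₁ with rfl | hm <;> simp [*]

theorem userRate_soleUserBid (hc : 0 ≤ c) (hm₁ : c m₁ ≠ 0) {x : ℝ} (hx : 0 ≤ x) (m : ι) :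
    userRate (Pi.single m₁ (c m₁ / 2 * x)) (soleUserBid c m₁ x) m =
      (Pi.single m₁ x : ι → ℝ) m := by
  rw [← bestResponse_soleUserBid hm₁, userRate_bestResponse hc (soleUserBid_nonneg (hc m₁) hx),
    soleUserBid_mul_div_two hm₁]

end SoleUserBid

variable [Fintype ι]

/-- The total rate `∑ m, β m * c m / 2` that a link bidding `β` serves once the users have
responded, see `userRate_bestResponse`. -/
noncomputable def linkRate (c β : ι → ℝ) : ℝ :=
  ∑ m, β m * c m / 2

/-- The induced pay-off `S_ℓ` of a link with cost `V`: the payments it collects less the cost of the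
rate it serves. -/
noncomputable def linkPayoff (V : ℝ → ℝ) (c β : ι → ℝ) : ℝ :=
  -V (linkRate c β) + ∑ m, bestResponse c β m

theorem linkRate_nonneg {c β : ι → ℝ} (hc : 0 ≤ c) (hβ : 0 ≤ β) : 0 ≤ linkRate c β :=
  sum_nonneg fun m _ => div_nonneg (mul_nonneg (hβ m) (hc m)) zero_le_two

theorem sum_bestResponse_le {c β : ι → ℝ} {a : ℝ} (hc : 0 ≤ c) (hβ : 0 ≤ β) (ha : ∀ m, c m ≤ a) :
    ∑ m, bestResponse c β m ≤ a / 2 * linkRate c β := by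
  rw [linkRate, mul_sum]
  refine sum_le_sum fun m _ => ?_
  calc bestResponse c β m = c m / 2 * (β m * c m / 2) := by unfold bestResponse; ring
    _ ≤ a / 2 * (β m * c m / 2) := by
        gcongr
        · exact div_nonneg (mul_nonneg (hβ m) (hc m)) zero_le_two
        · exact ha m

variable [DecidableEq ι] {c : ι → ℝ} {m₁ : ι}

theorem linkPayoff_soleUserBid (V : ℝ → ℝ) (hm₁ : c m₁ ≠ 0) (x : ℝ) :
    linkPayoff V c (soleUserBid c m₁ x) = c m₁ / 2 * x - V x := by
  have hrate : linkRate c (soleUserBid c m₁ x) = x := by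
    simp only [linkRate, soleUserBid_mul_div_two hm₁, Fintype.sum_pi_single']
  rw [linkPayoff, hrate, bestResponse_soleUserBid hm₁, Fintype.sum_pi_single', neg_add_eq_sub]

theorem isMaxOn_linkPayoff_soleUserBid (hc : 0 ≤ c) (hm₁ : c m₁ ≠ 0) (hmax : ∀ m, c m ≤ c m₁)
    {V : ℝ → ℝ} {x : ℝ} (hx : IsMaxOn (fun y => c m₁ / 2 * y - V y) (Set.Ici 0) x) :
    IsMaxOn (linkPayoff V c) (Set.Ici 0) (soleUserBid c m₁ x) := by
  refine isMaxOn_iff.2 fun β hβ => ?_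
  calc linkPayoff V c β
      ≤ c m₁ / 2 * linkRate c β - V (linkRate c β) := by
        rw [linkPayoff, neg_add_eq_sub]
        gcongr
        exact sum_bestResponse_le hc hβ hmax
    _ ≤ c m₁ / 2 * x - V x := isMaxOn_iff.1 hx _ (linkRate_nonneg hc hβ)
    _ = linkPayoff V c (soleUserBid c m₁ x) := (linkPayoff_soleUserBid V hm₁ x).symm

theorem statement18_general {κ : Type*} (hc : 0 ≤ c) (hm₁ : c m₁ ≠ 0) (hmax : ∀ m, c m ≤ c m₁)
    {V : κ → ℝ → ℝ} {x : κ → ℝ} (hx : 0 ≤ x)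
    (hxmax : ∀ ℓ, IsMaxOn (fun y => c m₁ / 2 * y - V ℓ y) (Set.Ici 0) (x ℓ)) :
    (∀ ℓ, IsMaxOn (linkPayoff (V ℓ) c) (Set.Ici 0) (soleUserBid c m₁ (x ℓ))) ∧
    (∀ m ℓ, bestResponse c (soleUserBid c m₁ (x ℓ)) m =
      (Pi.single m₁ (c m₁ / 2 * x ℓ) : ι → ℝ) m) ∧
    (∀ m ℓ, userRate (Pi.single m₁ (c m₁ / 2 * x ℓ)) (soleUserBid c m₁ (x ℓ)) m =
      (Pi.single m₁ (x ℓ) : ι → ℝ) m) ∧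
    (∀ ℓ, ∑ m, userRate (Pi.single m₁ (c m₁ / 2 * x ℓ)) (soleUserBid c m₁ (x ℓ)) m = x ℓ) := by
  have hrate m ℓ := userRate_soleUserBid hc hm₁ (hx ℓ) m
  refine ⟨fun ℓ => isMaxOn_linkPayoff_soleUserBid hc hm₁ hmax (hxmax ℓ),
    fun m ℓ => congrFun (bestResponse_soleUserBid hm₁ (x ℓ)) m, hrate, fun ℓ => ?_⟩
  simp only [hrate, Fintype.sum_pi_single']

end LinearPayoffs

/-- Multi-link Stackelberg equilibrium for linear user pay-offs,
uncapacitated.  With `U m x = c m x`, `c m > 0`, `c m₁` maximal, and `w ℓ = v_ℓ⁻¹`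
the inverse of the marginal cost `v ℓ = V_ℓ'`:  the matrix `B*` with
`β*_{m₁ℓ} = (2/c m₁)·v_ℓ⁻¹(c m₁/2)` and `β*_{mℓ} = 0` for `m ≠ m₁` is such that each
column maximizes the decoupled link-`ℓ` objective; the induced user bids are
`p_{m₁ℓ} = (c m₁/2)·v_ℓ⁻¹(c m₁/2)` and `0` otherwise; user `m₁`'s rate on link `ℓ`
is `v_ℓ⁻¹(c m₁/2)`, all other users get zero, and the total rate served by link `ℓ`
is `v_ℓ⁻¹(c m₁/2)`. -/
theorem statement18
    (M L : ℕ) (hM : 0 < M) (hL : 0 < L)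
    (c : Fin M → ℝ) (hc : ∀ m, 0 < c m)
    (m₁ : Fin M) (hmax : ∀ m, c m ≤ c m₁)
    (V v w : Fin L → ℝ → ℝ)
    (hVconv : ∀ ℓ, StrictConvexOn ℝ (Set.Ici 0) (V ℓ))
    (hVmono : ∀ ℓ, StrictMonoOn (V ℓ) (Set.Ici 0))
    (hV0 : ∀ ℓ, V ℓ 0 = 0)
    (hv : ∀ ℓ, ∀ x ∈ Set.Ici (0:ℝ), HasDerivAt (V ℓ) (v ℓ x) x)
    (hv0 : ∀ ℓ, v ℓ 0 = 0)
    (hvmono : ∀ ℓ, StrictMonoOn (v ℓ) (Set.Ici 0))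
    (hvcont : ∀ ℓ, ContinuousOn (v ℓ) (Set.Ici 0))
    (hw : ∀ ℓ, ∀ y : ℝ, 0 < y → 0 ≤ w ℓ y ∧ v ℓ (w ℓ y) = y) :
    -- each column of B* maximizes the decoupled link-ℓ objective
    (∀ ℓ : Fin L, ∀ β : Fin M → ℝ, (∀ m, 0 ≤ β m) →
      -V ℓ (∑ m, β m * c m / 2) + ∑ m, β m * (c m) ^ 2 / 4 ≤
      -V ℓ (∑ m, (if m = m₁ then 2 / c m₁ * w ℓ (c m₁ / 2) else 0) * c m / 2) +
        ∑ m, (if m = m₁ then 2 / c m₁ * w ℓ (c m₁ / 2) else 0) * (c m) ^ 2 / 4) ∧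
    -- the induced user bids p_{mℓ}^{B*} = β*_{mℓ} c_m²/4
    (∀ m ℓ, (if m = m₁ then 2 / c m₁ * w ℓ (c m₁ / 2) else 0) * (c m) ^ 2 / 4 =
      (if m = m₁ then c m₁ / 2 * w ℓ (c m₁ / 2) else 0)) ∧
    -- the equilibrium rate of user m on link ℓ
    (∀ m ℓ, Real.sqrt ((if m = m₁ then c m₁ / 2 * w ℓ (c m₁ / 2) else 0) *
        (if m = m₁ then 2 / c m₁ * w ℓ (c m₁ / 2) else 0)) =
      (if m = m₁ then w ℓ (c m₁ / 2) else 0)) ∧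
    -- the total rate served by link ℓ
    (∀ ℓ, (∑ m, Real.sqrt ((if m = m₁ then c m₁ / 2 * w ℓ (c m₁ / 2) else 0) *
        (if m = m₁ then 2 / c m₁ * w ℓ (c m₁ / 2) else 0))) = w ℓ (c m₁ / 2)) := by
  have hw₁ ℓ := hw ℓ (c m₁ / 2) (half_pos (hc m₁))
  have hderiv ℓ : HasDerivWithinAt (V ℓ) (c m₁ / 2) (Set.Ici 0) (w ℓ (c m₁ / 2)) := by
    simpa only [(hw₁ ℓ).2] using (hv ℓ _ (hw₁ ℓ).1).hasDerivWithinAt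
  simpa only [isMaxOn_iff, Set.mem_Ici, Pi.le_def, Pi.zero_apply, linkPayoff, linkRate,
    bestResponse, userRate, soleUserBid, Pi.single_apply] using
    statement18_general (fun m => (hc m).le) (hc m₁).ne' hmax (fun ℓ => (hw₁ ℓ).1)
      fun ℓ => isMaxOn_mul_sub_of_convexOn (hVconv ℓ).convexOn (hw₁ ℓ).1 (hderiv ℓ)
end
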